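/- arXiv:1812.04086 — 2 statements merged into one kernel-verified Lean document; each statement's English description precedes it below -/
import Mathlib

section
/- Let (Ω,F,(F_t)_{t∈[0,T]},P) be a complete filtered probability space satisfying the usual conditions, T > 0 finite, and Γ : Ω × [0,T] ⇒ ℝ^d a progressively measurable set-valued mapping: for each t ∈ [0,T] and each open O ⊆ ℝ^d, {(ω,s) ∈ Ω × [0,t] | Γ_s(ω) ∩ O ≠ ∅} ∈ F_t ⊗ B([0,t]). Then the mapping ⃗Γ, defined pathwise by ⃗Γ_0(ω) := {0} and ⃗Γ_t(ω) := liminf_{s↑↑t} Γ_s(ω) for t ∈ (0,T], is predictable: {(ω,t) | ⃗Γ_t(ω) ∩ O ≠ ∅} belongs to the predictable σ-algebra for every open O ⊆ ℝ^d. -/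
open MeasureTheory Filter Set Topology
open scoped ENNReal Classical

/-- Euclidean space `ℝ^d`. -/
abbrev Euc (d : ℕ) := EuclideanSpace ℝ (Fin d)

/-- A sequence in `[0,T]` increasing strictly to `t` from the left. -/
def SeqToLeft (t : ℝ) (s : ℕ → ℝ) : Prop :=
  StrictMono s ∧ (∀ n, 0 ≤ s n ∧ s n < t) ∧ Tendsto s atTop (𝓝 t)

/-- `liminf_{s↑↑t} Γ_s`: the points `x` with `dist(x,Γ_{s_n}) → 0` along every strictly
increasing sequence `s_n → t`. -/
def leftLiminfSV {d : ℕ} (Γ : ℝ → Set (Euc d)) (t : ℝ) : Set (Euc d) :=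
  {x | ∀ s : ℕ → ℝ, SeqToLeft t s →
    Tendsto (fun n => Metric.infDist x (Γ (s n))) atTop (𝓝 0)}

/-- The mapping `⃗Γ` of left limits: `⃗Γ_0 = {0}` and `⃗Γ_t = liminf_{s↑↑t} Γ_s`. -/
def vecSV {d : ℕ} (Γ : ℝ → Set (Euc d)) (t : ℝ) : Set (Euc d) :=
  if t ≤ 0 then {0} else leftLiminfSV Γ t

/-!
A point `x` lies in the left limit inferior at `t` iff for every `ε > 0` the distance of `x` to
`Γ_s` is below `ε` for all `s` in some `(q, t)` with `q` rational. The pairs `(ω, t)` for which this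
fails on `(q, t)` are the union over the rationals `r > q` of `B_r × (r, T]`, where `B_r` is the
projection to `Ω` of a progressively measurable subset of `Ω × (q, r)`. Such a projection is the
preimage of an analytic set under a measurable map. Analytic sets are universally measurable, so
that completeness puts `B_r` in `F_r` and `B_r × (r, T]` in the predictable σ-algebra. To pass from
points to an open set `O`, write `O` as a countable union of compact sets `K`: by compactness the
left limit inferior meets `K` iff for every `n` some point of a countable dense set is `1 / n`-close
to `K` and eventually `1 / n`-close to `Γ_s`.
-/

section AnalyticSet

/-- The sequences whose first `k` terms are bounded by those of `n`. These sets decrease in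
`k` to the compact set `Set.Iic n`; they serve to approximate an analytic set by compact sets. -/
def boundedBefore (n : ℕ → ℕ) (k : ℕ) : Set (ℕ → ℕ) := {x | ∀ i < k, x i ≤ n i}

theorem boundedBefore_zero (n : ℕ → ℕ) : boundedBefore n 0 = univ := by
  simp [boundedBefore]

theorem boundedBefore_succ (n : ℕ → ℕ) (k : ℕ) :
    boundedBefore n (k + 1) = boundedBefore n k ∩ {x | x k ≤ n k} := by
  ext x
  exact Nat.forall_lt_succ_right

theorem antitone_boundedBefore (n : ℕ → ℕ) : Antitone (boundedBefore n) :=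
  fun _ _ hkl _ hx i hi => hx i (hi.trans_le hkl)

theorem isCompact_Iic_pi_nat {ι : Type*} (n : ι → ℕ) : IsCompact (Iic n) := by
  rw [← pi_univ_Iic]
  exact isCompact_univ_pi fun i => (finite_Iic (n i)).isCompact

variable {α : Type*}

theorem exists_lt_measure_image_inter_le [MeasurableSpace α] (μ : Measure α) (f : (ℕ → ℕ) → α)
    {c : ℝ≥0∞} {S : Set (ℕ → ℕ)} (hc : c < μ (f '' S)) (k : ℕ) :
    ∃ m : ℕ, c < μ (f '' (S ∩ {x | x k ≤ m})) := by
  have hmono : Monotone fun m : ℕ => f '' (S ∩ {x | x k ≤ m}) := fun a b hab =>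
    image_mono <| inter_subset_inter_right _ fun x (hx : x k ≤ a) => hx.trans hab
  have hunion : ⋃ m : ℕ, f '' (S ∩ {x | x k ≤ m}) = f '' S := by
    rw [← image_iUnion, ← inter_iUnion,
      inter_eq_left.2 fun x _ => mem_iUnion.2 ⟨x k, le_refl (x k)⟩]
  rwa [← hunion, hmono.measure_iUnion, lt_iSup_iff] at hc

theorem exists_forall_lt_measure_image_boundedBefore [MeasurableSpace α] (μ : Measure α)
    (f : (ℕ → ℕ) → α) {c : ℝ≥0∞} (hc : c < μ (range f)) :
    ∃ n : ℕ → ℕ, ∀ k, c < μ (f '' boundedBefore n k) := by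
  choose! m hm using fun (k : ℕ) (S : Set (ℕ → ℕ)) (hS : c < μ (f '' S)) =>
    exists_lt_measure_image_inter_le μ f hS k
  let S : ℕ → Set (ℕ → ℕ) := fun k => Nat.rec univ (fun k S => S ∩ {x | x k ≤ m k S}) k
  let n : ℕ → ℕ := fun k => m k (S k)
  have hS (k : ℕ) : boundedBefore n k = S k := by
    induction k with
    | zero => exact boundedBefore_zero n
    | succ k ih => rw [boundedBefore_succ, ih]
  refine ⟨n, fun k => ?_⟩
  induction k with
  | zero => rwa [boundedBefore_zero, image_univ]
  | succ k ih =>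
    rw [boundedBefore_succ]
    rw [hS] at ih ⊢
    exact hm k (S k) ih

theorem exists_boundedBefore_subset_of_Iic_subset {n : ℕ → ℕ} {U : Set (ℕ → ℕ)} (hU : IsOpen U)
    (hnU : Iic n ⊆ U) : ∃ k, boundedBefore n k ⊆ U := by
  by_contra! hout
  choose x hx hxU using fun k => not_subset.1 (hout k)
  -- `x k ⊓ n` stays in the compact set `Iic n` and agrees with `x k` in the first `k` coordinates.
  obtain ⟨z, hz, φ, hφ, hlim⟩ :=
    (isCompact_Iic_pi_nat n).tendsto_subseq (x := fun k => x k ⊓ n) fun k => mem_Iic.2 inf_le_right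
  have hxlim : Tendsto (x ∘ φ) atTop (𝓝 z) := by
    rw [tendsto_pi_nhds] at hlim ⊢
    refine fun i => (hlim i).congr' ?_
    filter_upwards [eventually_gt_atTop i] with k hk
    exact min_eq_left (hx (φ k) i (hk.trans_le hφ.le_apply))
  obtain ⟨k, hk⟩ := (hxlim.eventually (hU.mem_nhds (hnU hz))).exists
  exact hxU (φ k) hk

variable [TopologicalSpace α] [T2Space α] {f : (ℕ → ℕ) → α}

theorem iInter_closure_image_boundedBefore_subset (hf : Continuous f) (n : ℕ → ℕ) :
    ⋂ k, closure (f '' boundedBefore n k) ⊆ f '' Iic n := by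
  intro y hy
  by_contra hyn
  obtain ⟨U, V, hU, hV, hnU, hyV, hUV⟩ := SeparatedNhds.of_isCompact_isCompact
    ((isCompact_Iic_pi_nat n).image hf) isCompact_singleton (disjoint_singleton_right.2 hyn)
  obtain ⟨k, hk⟩ :=
    exists_boundedBefore_subset_of_Iic_subset (hU.preimage hf) (image_subset_iff.1 hnU)
  obtain ⟨z, hzV, hzk⟩ := mem_closure_iff.1 (mem_iInter.1 hy k) V hV (hyV rfl)
  exact hUV.notMem_of_mem_left (image_subset_iff.2 hk hzk) hzV

variable [MeasurableSpace α] [OpensMeasurableSpace α] {s : Set α}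

theorem exists_isCompact_subset_lt_measure_of_analyticSet (hs : AnalyticSet s) (μ : Measure α)
    [IsFiniteMeasure μ] {c : ℝ≥0∞} (hc : c < μ s) : ∃ K ⊆ s, IsCompact K ∧ c < μ K := by
  rw [AnalyticSet] at hs
  obtain rfl | ⟨f, hf, rfl⟩ := hs
  · simp at hc
  obtain ⟨c', hcc', hc'⟩ := exists_between hc
  obtain ⟨n, hn⟩ := exists_forall_lt_measure_image_boundedBefore μ f hc'
  refine ⟨f '' Iic n, image_subset_range _ _, (isCompact_Iic_pi_nat n).image hf, ?_⟩
  have hanti : Antitone fun k => closure (f '' boundedBefore n k) :=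
    fun _ _ hkl => closure_mono (image_mono (antitone_boundedBefore n hkl))
  calc
    c < c' := hcc'
    _ ≤ ⨅ k, μ (closure (f '' boundedBefore n k)) :=
      le_iInf fun k => (hn k).le.trans (measure_mono subset_closure)
    _ = μ (⋂ k, closure (f '' boundedBefore n k)) :=
      (hanti.measure_iInter (fun _ => isClosed_closure.nullMeasurableSet)
        ⟨0, measure_ne_top _ _⟩).symm
    _ ≤ μ (f '' Iic n) := measure_mono (iInter_closure_image_boundedBefore_subset hf n)

theorem nullMeasurableSet_of_analyticSet_of_isFiniteMeasure (hs : AnalyticSet s) (μ : Measure α)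
    [IsFiniteMeasure μ] : NullMeasurableSet s μ := by
  obtain h0 | h0 := eq_or_ne (μ s) 0
  · exact NullMeasurableSet.of_null h0
  obtain ⟨c, -, hc, hlim⟩ := exists_seq_strictMono_tendsto' (pos_iff_ne_zero.2 h0)
  choose K hKs hK hcK using fun n =>
    exists_isCompact_subset_lt_measure_of_analyticSet hs μ (hc n).2
  have hmeas : MeasurableSet (⋃ n, K n) := .iUnion fun n => (hK n).measurableSet
  have hle : μ s ≤ μ (⋃ n, K n) :=
    le_of_tendsto' hlim fun n => (hcK n).le.trans (measure_mono (subset_iUnion K n))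
  exact hmeas.nullMeasurableSet.congr (ae_eq_of_subset_of_measure_ge (iUnion_subset hKs) hle
    hmeas.nullMeasurableSet (measure_ne_top _ _))

theorem nullMeasurableSet_of_analyticSet (hs : AnalyticSet s) (μ : Measure α) [SFinite μ] :
    NullMeasurableSet s μ :=
  (nullMeasurableSet_of_analyticSet_of_isFiniteMeasure hs μ.toFinite).mono_ac
    (absolutelyContinuous_toFinite μ)

end AnalyticSet

section Projection

variable {Ω Y : Type*} [MeasurableSpace Y]

theorem measurableSpace_prod_mono_left {m m' : MeasurableSpace Ω} (h : m ≤ m') :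
    m.prod ‹MeasurableSpace Y› ≤ m'.prod ‹MeasurableSpace Y› :=
  sup_le_sup_right (MeasurableSpace.comap_mono h) _

theorem exists_seq_measurableSet_prod_generateFrom [MeasurableSpace Ω] {A : Set (Ω × Y)}
    (hA : MeasurableSet A) :
    ∃ B : ℕ → Set Ω, (∀ n, MeasurableSet (B n)) ∧
      MeasurableSet[(MeasurableSpace.generateFrom (range B)).prod inferInstance] A := by
  rw [← generateFrom_prod] at hA
  induction A, hA using MeasurableSpace.generateFrom_induction with
  | hC A hA _ =>
    obtain ⟨b, hb, t, ht, rfl⟩ := hA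
    refine ⟨fun _ => b, fun _ => hb, ?_⟩
    let _ : MeasurableSpace Ω := MeasurableSpace.generateFrom (range fun _ : ℕ => b)
    have hbgen : MeasurableSet b := MeasurableSpace.measurableSet_generateFrom ⟨0, rfl⟩
    exact hbgen.prod ht
  | empty => exact ⟨fun _ => ∅, fun _ => .empty, @MeasurableSet.empty _ (_)⟩
  | compl A _ ih =>
    obtain ⟨B, hB, hAB⟩ := ih
    exact ⟨B, hB, hAB.compl⟩
  | iUnion A _ ih =>
    choose B hB hAB using ih
    refine ⟨fun n => B n.unpair.1 n.unpair.2, fun n => hB _ _, ?_⟩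
    refine MeasurableSet.iUnion fun i =>
      measurableSpace_prod_mono_left (MeasurableSpace.generateFrom_mono ?_) _ (hAB i)
    rintro _ ⟨j, rfl⟩
    exact ⟨Nat.pair i j, by simp only [Nat.unpair_pair]⟩

theorem exists_measurable_preimage_prodMap_id [MeasurableSpace Ω] {A : Set (Ω × Y)}
    (hA : MeasurableSet A) :
    ∃ φ : Ω → ℕ → Bool, Measurable φ ∧
      ∃ A' : Set ((ℕ → Bool) × Y), MeasurableSet A' ∧ Prod.map φ id ⁻¹' A' = A := by
  obtain ⟨B, hB, hAB⟩ := exists_seq_measurableSet_prod_generateFrom hA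
  let φ : Ω → ℕ → Bool := fun ω n => (B n).boolIndicator ω
  have hφ : Measurable φ := measurable_pi_lambda _ fun n => measurable_to_bool <| by
    rw [preimage_boolIndicator_true]
    exact hB n
  have hle : MeasurableSpace.generateFrom (range B) ≤ MeasurableSpace.comap φ inferInstance := by
    refine MeasurableSpace.generateFrom_le ?_
    rintro _ ⟨n, rfl⟩
    exact ⟨(fun x => x n) ⁻¹' {true}, measurable_pi_apply n (measurableSet_singleton true),
      preimage_boolIndicator_true (B n)⟩
  have hprod : (MeasurableSpace.comap φ inferInstance).prod ‹MeasurableSpace Y› =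
      MeasurableSpace.comap (Prod.map φ id) inferInstance :=
    ((MeasurableSpace.comap_prodMap φ id).trans (by rw [MeasurableSpace.comap_id])).symm
  obtain ⟨A', hA', rfl⟩ := hprod.le A (measurableSpace_prod_mono_left hle A hAB)
  exact ⟨φ, hφ, A', hA', rfl⟩

variable [StandardBorelSpace Y]

theorem nullMeasurableSet_image_fst [MeasurableSpace Ω] (μ : Measure Ω) [SFinite μ]
    {A : Set (Ω × Y)} (hA : MeasurableSet A) : NullMeasurableSet (Prod.fst '' A) μ := by
  obtain ⟨φ, hφ, A', hA', rfl⟩ := exists_measurable_preimage_prodMap_id hA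
  have himage : Prod.fst '' (Prod.map φ id ⁻¹' A') = φ ⁻¹' (Prod.fst '' A') := by
    ext ω
    simp
  rw [himage]
  exact (nullMeasurableSet_of_analyticSet (hA'.analyticSet_image measurable_fst)
    (μ.map φ)).preimage (hφ.quasiMeasurePreserving μ)

theorem measurableSet_image_fst_of_forall_null {m mΩ : MeasurableSpace Ω} (hm : m ≤ mΩ)
    (μ : Measure Ω) [SFinite μ] (hnull : ∀ N, μ N = 0 → MeasurableSet[m] N) {A : Set (Ω × Y)}
    (hA : MeasurableSet[m.prod inferInstance] A) : MeasurableSet[m] (Prod.fst '' A) := by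
  let ν : @Measure Ω m := μ.toFinite.trim hm
  have hν : ν.IsComplete := ⟨fun N hN =>
    hnull N (absolutelyContinuous_toFinite μ (measure_eq_zero_of_trim_eq_zero hm hN))⟩
  exact (@nullMeasurableSet_image_fst Ω Y _ _ m ν inferInstance A hA).measurable_of_complete

end Projection

theorem le_infDist_iff_of_pos {X : Type*} [PseudoMetricSpace X] {C : Set X} {x : X} {ε : ℝ}
    (hε : 0 < ε) : ε ≤ Metric.infDist x C ↔
      C.Nonempty ∧ ¬(C ∩ Metric.ball x ε).Nonempty := by
  obtain rfl | hC := C.eq_empty_or_nonempty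
  · simp [hε]
  · simp only [Metric.le_infDist hC, hC, true_and, not_nonempty_iff_eq_empty,
      eq_empty_iff_forall_notMem, mem_inter_iff, Metric.mem_ball', not_and, not_lt]

theorem isSigmaCompact_of_isOpen {X : Type*} [PseudoEMetricSpace X] [SigmaCompactSpace X]
    {O : Set X} (hO : IsOpen O) : IsSigmaCompact O := by
  obtain ⟨F, hF, -, hFO, -⟩ := hO.exists_iUnion_isClosed
  rw [← hFO]
  exact isSigmaCompact_iUnion _ fun n =>
    isSigmaCompact_univ.of_isClosed_subset (hF n) (subset_univ _)

theorem exists_strictMono_tendsto_of_frequently_nhdsLT {α : Type*} [LinearOrder α]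
    [TopologicalSpace α] [OrderTopology α] [FirstCountableTopology α] {p : α → Prop} {a t : α}
    (hat : a < t) (hp : ∃ᶠ s in 𝓝[<] t, p s) :
    ∃ s : ℕ → α, StrictMono s ∧ (∀ n, a ≤ s n ∧ s n < t ∧ p (s n)) ∧ Tendsto s atTop (𝓝 t) := by
  have hfreq : ∃ᶠ s in 𝓝[<] t, a ≤ s ∧ s < t ∧ p s :=
    (hp.and_eventually (Ioo_mem_nhdsLT hat : ∀ᶠ s in 𝓝[<] t, s ∈ Ioo a t)).mono
      fun s hs => ⟨hs.2.1.le, hs.2.2, hs.1⟩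
  have hlub : IsLUB {s | a ≤ s ∧ s < t ∧ p s} t :=
    isLUB_of_mem_closure (fun s hs => hs.2.1.le)
      (mem_closure_iff_frequently.2 (hfreq.filter_mono nhdsWithin_le_nhds))
  obtain ⟨s, hs, -, hlim, hmem⟩ := hlub.exists_seq_strictMono_tendsto_of_notMem
    (fun ht => lt_irrefl t ht.2.1) hfreq.exists
  exact ⟨s, hs, hmem, hlim⟩

section LeftLiminf

variable {X : Type*} [PseudoMetricSpace X]

/-- The limit inferior of `Γ s` as `s` increases strictly to `t`, expressed by the filter `𝓝[<] t`
instead of sequences. Every point belongs to it if `Γ s` is empty for `s < t` near `t`, because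
`Metric.infDist x ∅ = 0`. -/
def leftLiminf (Γ : ℝ → Set X) (t : ℝ) : Set X :=
  {x | Tendsto (fun s => Metric.infDist x (Γ s)) (𝓝[<] t) (𝓝 0)}

/-- The mapping of left limits with value `C₀` at the times `t ≤ 0`. -/
def leftLimitMap (C₀ : Set X) (Γ : ℝ → Set X) (t : ℝ) : Set X :=
  if t ≤ 0 then C₀ else leftLiminf Γ t

theorem mem_leftLiminf_iff {Γ : ℝ → Set X} {t : ℝ} {x : X} :
    x ∈ leftLiminf Γ t ↔ ∀ ε > 0, ∀ᶠ s in 𝓝[<] t, Metric.infDist x (Γ s) < ε := by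
  simp only [leftLiminf, mem_ofPred_eq, Metric.tendsto_nhds, dist_zero_right, Real.norm_eq_abs,
    abs_of_nonneg Metric.infDist_nonneg]

theorem leftLiminfSV_eq_leftLiminf {d : ℕ} (Γ : ℝ → Set (Euc d)) {t : ℝ} (ht : 0 < t) :
    leftLiminfSV Γ t = leftLiminf Γ t := by
  refine Subset.antisymm (fun x hx => ?_) fun x hx s hs => ?_
  · rw [mem_leftLiminf_iff]
    intro ε hε
    by_contra hfreq
    rw [not_eventually] at hfreq
    obtain ⟨s, hs, hsε, hlim⟩ := exists_strictMono_tendsto_of_frequently_nhdsLT ht hfreq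
    have hsmall := (hx s ⟨hs, fun n => ⟨(hsε n).1, (hsε n).2.1⟩, hlim⟩).eventually_lt_const hε
    obtain ⟨n, hn⟩ := hsmall.exists
    exact (hsε n).2.2 hn
  · have hleft : Tendsto s atTop (𝓝[<] t) :=
      tendsto_nhdsWithin_iff.2 ⟨hs.2.2, .of_forall fun n => (hs.2.1 n).2⟩
    have hdist : Tendsto (fun s => Metric.infDist x (Γ s)) (𝓝[<] t) (𝓝 0) := hx
    exact hdist.comp hleft

theorem vecSV_eq_leftLimitMap {d : ℕ} (Γ : ℝ → Set (Euc d)) : vecSV Γ = leftLimitMap {0} Γ := by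
  ext1 t
  obtain ht | ht := le_or_gt t 0
  · simp only [vecSV, leftLimitMap, ht, if_true]
  · simp only [vecSV, leftLimitMap, ht.not_ge, if_false, leftLiminfSV_eq_leftLiminf Γ ht]

theorem exists_mem_eventually_infDist_lt_of_mem_leftLiminf {Γ : ℝ → Set X} {t : ℝ} {D K : Set X}
    (hD : Dense D) {x : X} (hx : x ∈ leftLiminf Γ t) (hxK : x ∈ K) {ε : ℝ} (hε : 0 < ε) :
    ∃ y ∈ D, y ∈ Metric.thickening ε K ∧ ∀ᶠ s in 𝓝[<] t, Metric.infDist y (Γ s) < ε := by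
  obtain ⟨y, hyD, hxy⟩ := hD.exists_dist_lt x (half_pos hε)
  refine ⟨y, hyD, Metric.mem_thickening_iff.2 ⟨x, hxK, ?_⟩, ?_⟩
  · rw [dist_comm]
    linarith
  · filter_upwards [mem_leftLiminf_iff.1 hx (ε / 2) (half_pos hε)] with s hs
    have := Metric.infDist_le_infDist_add_dist (s := Γ s) (x := y) (y := x)
    rw [dist_comm] at this
    linarith

theorem leftLiminf_inter_nonempty_of_forall_exists {Γ : ℝ → Set X} {t : ℝ} {K : Set X}
    (hK : IsCompact K) {u : ℕ → ℝ} (hu : Tendsto u atTop (𝓝 0))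
    (h : ∀ n, ∃ y ∈ Metric.thickening (u n) K, ∀ᶠ s in 𝓝[<] t, Metric.infDist y (Γ s) < u n) :
    (leftLiminf Γ t ∩ K).Nonempty := by
  choose y hyK hyΓ using h
  choose x hxK hyx using fun n => Metric.mem_thickening_iff.1 (hyK n)
  obtain ⟨z, hzK, φ, hφ, hxz⟩ := hK.tendsto_subseq hxK
  refine ⟨z, mem_leftLiminf_iff.2 fun ε hε => ?_, hzK⟩
  have hux := (hu.comp hφ.tendsto_atTop).eventually_lt_const (show (0 : ℝ) < ε / 3 by positivity)
  have hxz' := Metric.tendsto_nhds.1 hxz (ε / 3) (by positivity)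
  obtain ⟨n, hn, hnz⟩ := (hux.and hxz').exists
  simp only [Function.comp_apply] at hn hnz
  filter_upwards [hyΓ (φ n)] with s hs
  calc
    Metric.infDist z (Γ s) ≤ Metric.infDist (y (φ n)) (Γ s) + dist z (y (φ n)) :=
      Metric.infDist_le_infDist_add_dist
    _ ≤ Metric.infDist (y (φ n)) (Γ s) + (dist (x (φ n)) z + dist (y (φ n)) (x (φ n))) := by
      gcongr
      rw [dist_comm (y (φ n)), dist_comm _ z]
      exact dist_triangle _ _ _
    _ < ε := by linarith [hyx (φ n)]

theorem leftLiminf_inter_nonempty_iff {Γ : ℝ → Set X} {t : ℝ} {D K : Set X} (hD : Dense D)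
    (hK : IsCompact K) :
    (leftLiminf Γ t ∩ K).Nonempty ↔ ∀ n : ℕ, ∃ y ∈ D, y ∈ Metric.thickening (1 / (n + 1)) K ∧
      ∀ᶠ s in 𝓝[<] t, Metric.infDist y (Γ s) < 1 / (n + 1) := by
  constructor
  · rintro ⟨x, hx, hxK⟩ n
    exact exists_mem_eventually_infDist_lt_of_mem_leftLiminf hD hx hxK Nat.one_div_pos_of_nat
  · intro h
    refine leftLiminf_inter_nonempty_of_forall_exists hK tendsto_one_div_add_atTop_nhds_zero_nat
      fun n => ?_
    obtain ⟨y, -, hyK, hyΓ⟩ := h n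
    exact ⟨y, hyK, hyΓ⟩

end LeftLiminf

section Predictable

variable {Ω : Type*} {mΩ : MeasurableSpace Ω} {𝓕 : Filtration ℝ mΩ} {T : ℝ}

/-- The predictable σ-algebra of `Ω × [0, T]`, as a σ-algebra on `Ω × ℝ`. It is not Mathlib's
`Filtration.predictable`, which asks the time set for a least element. -/
@[reducible]
def predictableSpace (𝓕 : Filtration ℝ mΩ) (T : ℝ) : MeasurableSpace (Ω × ℝ) :=
  MeasurableSpace.generateFrom
    {s : Set (Ω × ℝ) |
      (∃ B : Set Ω, MeasurableSet[𝓕 0] B ∧ s = B ×ˢ ({0} : Set ℝ)) ∨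
      (∃ u v : ℝ, ∃ B : Set Ω, 0 ≤ u ∧ u < v ∧ v ≤ T ∧ MeasurableSet[𝓕 u] B ∧
        s = B ×ˢ Set.Ioc u v)}

/-- A set of pairs `(ω, s)` is progressive on `[0, T]` if for every `t ∈ [0, T]` its part with
`s ∈ [0, t]` lies in `𝓕 t ⊗ B(ℝ)`. -/
def IsProgressiveSet (𝓕 : Filtration ℝ mΩ) (T : ℝ) (B : Set (Ω × ℝ)) : Prop :=
  ∀ t ∈ Icc 0 T, MeasurableSet[(𝓕 t).prod inferInstance] {p | p.2 ∈ Icc 0 t ∧ p ∈ B}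

/-- Progressive measurability on `[0, T]` of a set-valued mapping with values in `X`, tested on the
hitting sets of the open subsets of `X`. -/
def IsProgressiveMap {X : Type*} [TopologicalSpace X] (𝓕 : Filtration ℝ mΩ) (T : ℝ)
    (Γ : Ω → ℝ → Set X) : Prop :=
  ∀ O, IsOpen O → IsProgressiveSet 𝓕 T {p | (Γ p.1 p.2 ∩ O).Nonempty}

theorem measurableSet_predictableSpace_prod_singleton {B : Set Ω} (hB : MeasurableSet[𝓕 0] B) :
    MeasurableSet[predictableSpace 𝓕 T] (B ×ˢ {0}) :=
  MeasurableSpace.measurableSet_generateFrom (Or.inl ⟨B, hB, rfl⟩)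

theorem measurableSet_predictableSpace_prod_Ioc {u : ℝ} {B : Set Ω} (hu : 0 ≤ u)
    (hB : MeasurableSet[𝓕 u] B) : MeasurableSet[predictableSpace 𝓕 T] (B ×ˢ Ioc u T) := by
  obtain huT | hTu := lt_or_ge u T
  · exact MeasurableSpace.measurableSet_generateFrom
      (Or.inr ⟨u, T, B, hu, huT, le_rfl, hB, rfl⟩)
  · simp only [Ioc_eq_empty_of_le hTu, prod_empty, MeasurableSet.empty]

theorem IsProgressiveSet.diff {B C : Set (Ω × ℝ)} (hB : IsProgressiveSet 𝓕 T B)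
    (hC : IsProgressiveSet 𝓕 T C) : IsProgressiveSet 𝓕 T (B \ C) := by
  intro t ht
  convert (hB t ht).diff (hC t ht) using 1
  ext p
  simp only [mem_ofPred_eq, Set.mem_sdiff]
  tauto

variable {P : Measure Ω} [SFinite P]

theorem IsProgressiveSet.measurableSet_image_fst_Ioo (hnull : ∀ N, P N = 0 → MeasurableSet[𝓕 0] N)
    {B : Set (Ω × ℝ)} (hB : IsProgressiveSet 𝓕 T B) {q r : ℝ} (hq : 0 ≤ q) (hr : r ∈ Icc 0 T) :
    MeasurableSet[𝓕 r] (Prod.fst '' {p | p.2 ∈ Ioo q r ∧ p ∈ B}) := by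
  refine measurableSet_image_fst_of_forall_null (𝓕.le r) P
    (fun N hN => 𝓕.mono hr.1 N (hnull N hN)) ?_
  convert (hB r hr).inter ((@measurable_snd Ω ℝ (𝓕 r) _) (measurableSet_Ioo (a := q) (b := r)))
    using 1
  ext p
  simp only [mem_ofPred_eq, mem_inter_iff, mem_preimage]
  exact ⟨fun h => ⟨⟨⟨hq.trans h.1.1.le, h.1.2.le⟩, h.2⟩, h.1⟩, fun h => ⟨h.2, h.1.2⟩⟩

theorem IsProgressiveSet.measurableSet_exists_Ioo (hnull : ∀ N, P N = 0 → MeasurableSet[𝓕 0] N)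
    {B : Set (Ω × ℝ)} (hB : IsProgressiveSet 𝓕 T B) {q : ℝ} (hq : 0 ≤ q) :
    MeasurableSet[predictableSpace 𝓕 T]
      {p : Ω × ℝ | p.2 ∈ Ioc q T ∧ ∃ s ∈ Ioo q p.2, (p.1, s) ∈ B} := by
  have hunion : {p : Ω × ℝ | p.2 ∈ Ioc q T ∧ ∃ s ∈ Ioo q p.2, (p.1, s) ∈ B} =
      ⋃ (r : ℚ) (_ : (r : ℝ) ∈ Ioo q T),
        (Prod.fst '' {p | p.2 ∈ Ioo q r ∧ p ∈ B}) ×ˢ Ioc (r : ℝ) T := by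
    ext ⟨ω, t⟩
    simp only [mem_ofPred_eq, mem_iUnion, mem_prod, mem_image, Prod.exists, exists_prop,
      exists_and_right, exists_eq_right]
    constructor
    · rintro ⟨⟨-, htT⟩, s, ⟨hqs, hst⟩, hs⟩
      obtain ⟨r, hsr, hrt⟩ := exists_rat_btwn hst
      exact ⟨r, ⟨hqs.trans hsr, hrt.trans_le htT⟩, ⟨s, ⟨hqs, hsr⟩, hs⟩, hrt, htT⟩
    · rintro ⟨r, ⟨hqr, -⟩, ⟨s, ⟨hqs, hsr⟩, hs⟩, hrt, htT⟩
      exact ⟨⟨hqr.trans hrt, htT⟩, s, ⟨hqs, hsr.trans hrt⟩, hs⟩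
  rw [hunion]
  refine .iUnion fun r => .iUnion fun hr => ?_
  have hr0 : (0 : ℝ) ≤ r := hq.trans hr.1.le
  exact measurableSet_predictableSpace_prod_Ioc hr0
    (hB.measurableSet_image_fst_Ioo hnull hq ⟨hr0, hr.2.le⟩)

theorem IsProgressiveSet.measurableSet_eventually_notMem
    (hnull : ∀ N, P N = 0 → MeasurableSet[𝓕 0] N) {B : Set (Ω × ℝ)}
    (hB : IsProgressiveSet 𝓕 T B) :
    MeasurableSet[predictableSpace 𝓕 T]
      {p : Ω × ℝ | p.2 ∈ Ioc 0 T ∧ ∀ᶠ s in 𝓝[<] p.2, (p.1, s) ∉ B} := by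
  have hunion : {p : Ω × ℝ | p.2 ∈ Ioc 0 T ∧ ∀ᶠ s in 𝓝[<] p.2, (p.1, s) ∉ B} =
      ⋃ (q : ℚ) (_ : (0 : ℝ) ≤ q), univ ×ˢ Ioc (q : ℝ) T \
        {p : Ω × ℝ | p.2 ∈ Ioc (q : ℝ) T ∧ ∃ s ∈ Ioo (q : ℝ) p.2, (p.1, s) ∈ B} := by
    ext ⟨ω, t⟩
    simp only [mem_ofPred_eq, mem_iUnion, Set.mem_sdiff, mem_prod, mem_univ, true_and, exists_prop,
      not_and, not_exists]
    constructor
    · rintro ⟨⟨ht0, htT⟩, hev⟩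
      obtain ⟨u, hut, hu⟩ := (mem_nhdsLT_iff_exists_Ioo_subset' ht0).1 hev
      obtain ⟨q, hq, hqt⟩ := exists_rat_btwn (max_lt ht0 hut)
      rw [max_lt_iff] at hq
      exact ⟨q, hq.1.le, ⟨hqt, htT⟩, fun _ s hs => hu ⟨hq.2.trans hs.1, hs.2⟩⟩
    · rintro ⟨q, hq, ht, hs⟩
      exact ⟨⟨hq.trans_lt ht.1, ht.2⟩, eventually_of_mem (Ioo_mem_nhdsLT ht.1) (hs ht)⟩
  rw [hunion]
  refine .iUnion fun q => .iUnion fun hq => .diff ?_ (hB.measurableSet_exists_Ioo hnull hq)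
  exact measurableSet_predictableSpace_prod_Ioc hq .univ

variable {X : Type*} [PseudoMetricSpace X] {Γ : Ω → ℝ → Set X}

theorem isProgressiveSet_le_infDist (hΓ : IsProgressiveMap 𝓕 T Γ) (x : X) {ε : ℝ} (hε : 0 < ε) :
    IsProgressiveSet 𝓕 T {p | ε ≤ Metric.infDist x (Γ p.1 p.2)} := by
  convert (hΓ univ isOpen_univ).diff (hΓ (Metric.ball x ε) Metric.isOpen_ball) using 1
  ext p
  simp only [mem_ofPred_eq, Set.mem_sdiff, inter_univ, le_infDist_iff_of_pos hε]

theorem measurableSet_eventually_infDist_lt (hnull : ∀ N, P N = 0 → MeasurableSet[𝓕 0] N)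
    (hΓ : IsProgressiveMap 𝓕 T Γ) (x : X) {ε : ℝ} (hε : 0 < ε) :
    MeasurableSet[predictableSpace 𝓕 T]
      {p : Ω × ℝ | p.2 ∈ Ioc 0 T ∧ ∀ᶠ s in 𝓝[<] p.2, Metric.infDist x (Γ p.1 s) < ε} := by
  simpa only [mem_ofPred_eq, not_le] using
    (isProgressiveSet_le_infDist hΓ x hε).measurableSet_eventually_notMem hnull

theorem measurableSet_leftLiminf_inter_nonempty_of_isCompact [TopologicalSpace.SeparableSpace X]
    (hnull : ∀ N, P N = 0 → MeasurableSet[𝓕 0] N) (hΓ : IsProgressiveMap 𝓕 T Γ) {K : Set X}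
    (hK : IsCompact K) :
    MeasurableSet[predictableSpace 𝓕 T]
      {p : Ω × ℝ | p.2 ∈ Ioc 0 T ∧ (leftLiminf (Γ p.1) p.2 ∩ K).Nonempty} := by
  obtain ⟨D, hDcount, hD⟩ := TopologicalSpace.exists_countable_dense X
  have heq : {p : Ω × ℝ | p.2 ∈ Ioc 0 T ∧ (leftLiminf (Γ p.1) p.2 ∩ K).Nonempty} =
      ⋂ n : ℕ, ⋃ y ∈ D ∩ Metric.thickening (1 / (n + 1) : ℝ) K, {p : Ω × ℝ | p.2 ∈ Ioc 0 T ∧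
        ∀ᶠ s in 𝓝[<] p.2, Metric.infDist y (Γ p.1 s) < 1 / (n + 1)} := by
    ext p
    simp only [leftLiminf_inter_nonempty_iff hD hK, mem_ofPred_eq, mem_iInter, mem_iUnion,
      exists_prop, mem_inter_iff]
    exact ⟨fun ⟨hp, h⟩ n => (h n).imp fun y hy => ⟨⟨hy.1, hy.2.1⟩, hp, hy.2.2⟩,
      fun h => ⟨(h 0).choose_spec.2.1, fun n => (h n).imp fun y hy => ⟨hy.1.1, hy.1.2, hy.2.2⟩⟩⟩
  rw [heq]
  exact .iInter fun n => .biUnion (hDcount.mono inter_subset_left) fun y _ =>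
    measurableSet_eventually_infDist_lt hnull hΓ y Nat.one_div_pos_of_nat

theorem measurableSet_leftLiminf_inter_nonempty_of_isOpen [SigmaCompactSpace X]
    (hnull : ∀ N, P N = 0 → MeasurableSet[𝓕 0] N) (hΓ : IsProgressiveMap 𝓕 T Γ) {O : Set X}
    (hO : IsOpen O) :
    MeasurableSet[predictableSpace 𝓕 T]
      {p : Ω × ℝ | p.2 ∈ Ioc 0 T ∧ (leftLiminf (Γ p.1) p.2 ∩ O).Nonempty} := by
  obtain ⟨K, hK, rfl⟩ := isSigmaCompact_of_isOpen hO
  simp only [inter_iUnion, nonempty_iUnion, ← exists_and_left, ofPred_exists]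
  exact .iUnion fun n => measurableSet_leftLiminf_inter_nonempty_of_isCompact hnull hΓ (hK n)

end Predictable

theorem statement14_general {Ω X : Type*} {mΩ : MeasurableSpace Ω} [PseudoMetricSpace X]
    [SigmaCompactSpace X] (T : ℝ) (P : Measure Ω) [SFinite P] (𝓕 : Filtration ℝ mΩ)
    (hnull : ∀ N, P N = 0 → MeasurableSet[𝓕 0] N) (Γ : Ω → ℝ → Set X) (C₀ : Set X)
    (hΓ : IsProgressiveMap 𝓕 T Γ) (O : Set X) (hO : IsOpen O) :
    MeasurableSet[predictableSpace 𝓕 T]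
      {p : Ω × ℝ | p.2 ∈ Icc 0 T ∧ (leftLimitMap C₀ (Γ p.1) p.2 ∩ O).Nonempty} := by
  have hpos := measurableSet_leftLiminf_inter_nonempty_of_isOpen hnull hΓ hO
  have hzero : MeasurableSet[predictableSpace 𝓕 T]
      {p : Ω × ℝ | p.2 = 0 ∧ 0 ≤ T ∧ (C₀ ∩ O).Nonempty} := by
    by_cases h : 0 ≤ T ∧ (C₀ ∩ O).Nonempty
    · convert measurableSet_predictableSpace_prod_singleton (T := T) (@MeasurableSet.univ _ (𝓕 0))
      simp only [h, and_true, univ_prod]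
      rfl
    · simp only [h, and_false, ofPred_false, MeasurableSet.empty]
  convert hzero.union hpos using 1
  ext ⟨ω, t⟩
  simp only [mem_ofPred_eq, mem_union]
  obtain ht | rfl | ht := lt_trichotomy t 0
  · simp [ht.not_ge, ht.ne, ht.not_gt]
  · simp [leftLimitMap]
  · simp [leftLimitMap, ht, ht.le, ht.ne', ht.not_ge]

/-- **Predictability of the left-limit mapping** (Lemma 7.5, second part): if
`Γ : Ω × [0,T] ⇒ ℝ^d` is progressively measurable with respect to a filtration
satisfying the usual conditions, then `⃗Γ` is predictable, i.e. `{(ω,t) | ⃗Γ_t(ω) ∩ O ≠ ∅}`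
belongs to the predictable σ-algebra (generated by the sets `A × {0}`, `A ∈ F_0`, and
`A × (u,v]`, `A ∈ F_u`) for every open `O`. -/
theorem statement14 {Ω : Type*} [mΩ : MeasurableSpace Ω] {d : ℕ} (T : ℝ) (hT : 0 < T)
    (P : Measure Ω) [IsProbabilityMeasure P] (hP : P.IsComplete)
    (F : ℝ → MeasurableSpace Ω) (hFmono : Monotone F) (hFle : ∀ t, F t ≤ mΩ)
    -- usual conditions: right-continuity and completeness of the filtration
    (hFright : ∀ t : ℝ, F t = ⨅ (s : ℝ) (_ : t < s), F s)
    (hFnull : ∀ N : Set Ω, P N = 0 → MeasurableSet[F 0] N)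
    (Γ : Ω → ℝ → Set (Euc d))
    -- progressive measurability of `Γ`
    (hprog : ∀ t ∈ Set.Icc (0:ℝ) T, ∀ O : Set (Euc d), IsOpen O →
      MeasurableSet[(F t).prod (inferInstance : MeasurableSpace ℝ)]
        {p : Ω × ℝ | p.2 ∈ Set.Icc (0:ℝ) t ∧ (Γ p.1 p.2 ∩ O).Nonempty}) :
    ∀ O : Set (Euc d), IsOpen O →
      MeasurableSet[MeasurableSpace.generateFrom
        {s : Set (Ω × ℝ) |
          (∃ B : Set Ω, MeasurableSet[F 0] B ∧ s = B ×ˢ ({0} : Set ℝ)) ∨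
          (∃ u v : ℝ, ∃ B : Set Ω, 0 ≤ u ∧ u < v ∧ v ≤ T ∧ MeasurableSet[F u] B ∧
            s = B ×ˢ Set.Ioc u v)}]
        {p : Ω × ℝ | p.2 ∈ Set.Icc (0:ℝ) T ∧ (vecSV (Γ p.1) p.2 ∩ O).Nonempty} := by
  simpa only [vecSV_eq_leftLimitMap] using
    statement14_general T P ⟨F, hFmono, hFle⟩ hFnull Γ {0} fun O hO t ht => hprog t ht O hO
end

section
/- Let T > 0 be finite, b : [0,T] → ℝ right-upper semicontinuous (limsup_{s↓↓t} b_s ≤ b_t for t ∈ [0,T)) and a : [0,T] → ℝ right-lower semicontinuous (liminf_{s↓↓t} a_s ≥ a_t for t ∈ [0,T)). Suppose there exists a càdlàg function ȳ with b_t < ȳ_t < a_t for all t ∈ [0,T] and ⃗b_t < ȳ_{t-} < a⃗_t for all t ∈ (0,T], where ⃗b_t := limsup_{s↑↑t} b_s and a⃗_t := liminf_{s↑↑t} a_s. Let S_t := {y ∈ ℝ | b_t ≤ y ≤ a_t} and D(S) := {y ∈ D | b_t ≤ y_t ≤ a_t for all t}. Then for every t ∈ (0,T], cl{y_{t-} |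 y ∈ D(S)} = {x ∈ ℝ | ⃗b_t ≤ x ≤ a⃗_t}. -/
open MeasureTheory Filter Set Topology
open scoped ENNReal Classical

/-- A function `[0,T] → ℝ` (modelled on `ℝ`) is càdlàg: right-continuous on `[0,T)` with
left limits on `(0,T]`. -/
def IsCadlagOnR (T : ℝ) (y : ℝ → ℝ) : Prop :=
  (∀ t ∈ Set.Ico (0:ℝ) T, Tendsto y (𝓝[>] t) (𝓝 (y t))) ∧
  (∀ t ∈ Set.Ioc (0:ℝ) T, ∃ l, Tendsto y (𝓝[<] t) (𝓝 l))

/-- The left upper semicontinuous regularization `⃗b_t = limsup_{s↑↑t} b_s`, as an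
extended real. -/
noncomputable def lregUsc (b : ℝ → ℝ) (t : ℝ) : EReal :=
  Filter.limsup (fun s => (b s : EReal)) (𝓝[<] t)

/-- The left lower semicontinuous regularization `a⃗_t = liminf_{s↑↑t} a_s`, as an
extended real. -/
noncomputable def lregLsc (a : ℝ → ℝ) (t : ℝ) : EReal :=
  Filter.liminf (fun s => (a s : EReal)) (𝓝[<] t)

/-!
A càdlàg selection may be overwritten by a constant on a half-open interval `[u, t)` without leaving
the càdlàg class, and its left limit at `t` then becomes that constant. If `⃗b_t < x < a⃗_t`, the
constant `x` lies between `b` and `a` just before `t`, so every such `x` is the left limit of a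
selection. An endpoint of `[⃗b_t, a⃗_t]` is approached from the left limit of one fixed selection;
when the interval degenerates to a point, that left limit is itself the point.
-/

section OneSidedGerms

variable {α : Type*} [LinearOrder α] [TopologicalSpace α]

theorem eventually_nhdsGT_le_iff [ClosedIciTopology α] (c r : α) :
    ∀ᶠ s in 𝓝[>] r, (c ≤ s ↔ c ≤ r) := by
  rcases le_or_gt c r with hcr | hrc
  · filter_upwards [self_mem_nhdsWithin] with s hs
    exact iff_of_true (hcr.trans (le_of_lt hs)) hcr
  · filter_upwards [nhdsWithin_le_nhds (Iio_mem_nhds hrc)] with s hs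
    exact iff_of_false (not_le.2 hs) (not_le.2 hrc)

theorem eventually_nhdsLT_le_iff [ClosedIicTopology α] (c r : α) :
    ∀ᶠ s in 𝓝[<] r, (c ≤ s ↔ c < r) := by
  rcases lt_or_ge c r with hcr | hrc
  · filter_upwards [nhdsWithin_le_nhds (Ioi_mem_nhds hcr)] with s hs
    exact iff_of_true (le_of_lt hs) hcr
  · filter_upwards [self_mem_nhdsWithin] with s hs
    exact iff_of_false (not_le.2 (lt_of_lt_of_le hs hrc)) (not_lt.2 hrc)

theorem eventually_nhdsGT_mem_Ico_iff [ClosedIciTopology α] (u v r : α) :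
    ∀ᶠ s in 𝓝[>] r, (s ∈ Ico u v ↔ r ∈ Ico u v) := by
  filter_upwards [eventually_nhdsGT_le_iff u r, eventually_nhdsGT_le_iff v r] with s hu hv
  rw [mem_Ico, mem_Ico, hu, ← not_le, hv, not_le]

theorem eventually_nhdsLT_mem_Ico_iff [ClosedIicTopology α] (u v r : α) :
    ∀ᶠ s in 𝓝[<] r, (s ∈ Ico u v ↔ r ∈ Ioc u v) := by
  filter_upwards [eventually_nhdsLT_le_iff u r, eventually_nhdsLT_le_iff v r] with s hu hv
  rw [mem_Ico, mem_Ioc, hu, ← not_le (a := v), hv, not_lt]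

variable {β : Type*} (z y : α → β)

theorem piecewise_Ico_eventuallyEq_nhdsGT [ClosedIciTopology α] (u v r : α) :
    (Ico u v).piecewise z y =ᶠ[𝓝[>] r] if r ∈ Ico u v then z else y := by
  filter_upwards [eventually_nhdsGT_mem_Ico_iff u v r] with s hs
  simp only [piecewise, hs, ite_apply]

theorem piecewise_Ico_eventuallyEq_nhdsLT [ClosedIicTopology α] (u v r : α) :
    (Ico u v).piecewise z y =ᶠ[𝓝[<] r] if r ∈ Ioc u v then z else y := by
  filter_upwards [eventually_nhdsLT_mem_Ico_iff u v r] with s hs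
  simp only [piecewise, hs, ite_apply]

end OneSidedGerms

theorem preimage_Icc_subset_closure_insert_preimage_Ioo {α β : Type*} [LinearOrder α]
    [DenselyOrdered α] [TopologicalSpace α] [OrderTopology α] [Preorder β] {f : α → β}
    (hf : StrictMono f) {m : α} {L U : β} (hm : f m ∈ Icc L U) :
    f ⁻¹' Icc L U ⊆ closure (insert m (f ⁻¹' Ioo L U)) := by
  have Ioo_subset {p q : α} (hp : L ≤ f p) (hq : f q ≤ U) :
      Ioo p q ⊆ insert m (f ⁻¹' Ioo L U) := fun _ hz =>
    mem_insert_of_mem m ⟨hp.trans_lt (hf hz.1), (hf hz.2).trans_le hq⟩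
  intro x hx
  rcases lt_trichotomy x m with hxm | rfl | hmx
  · refine closure_mono (Ioo_subset hx.1 hm.2) ?_
    rw [closure_Ioo hxm.ne]
    exact left_mem_Icc.2 hxm.le
  · exact subset_closure (mem_insert x _)
  · refine closure_mono (Ioo_subset hm.1 hx.2) ?_
    rw [closure_Ioo hmx.ne]
    exact right_mem_Icc.2 hmx.le

section Cadlag

variable {T u v t l x : ℝ} {b a y z : ℝ → ℝ}

theorem isCadlagOnR_const (T x : ℝ) : IsCadlagOnR T fun _ => x :=
  ⟨fun _ _ => tendsto_const_nhds, fun _ _ => ⟨x, tendsto_const_nhds⟩⟩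

theorem IsCadlagOnR.piecewise_Ico (hz : IsCadlagOnR T z) (hy : IsCadlagOnR T y) (u v : ℝ) :
    IsCadlagOnR T ((Ico u v).piecewise z y) := by
  constructor
  · intro r hr
    rw [tendsto_congr' (piecewise_Ico_eventuallyEq_nhdsGT z y u v r), piecewise]
    split_ifs
    exacts [hz.1 r hr, hy.1 r hr]
  · intro r hr
    simp only [tendsto_congr' (piecewise_Ico_eventuallyEq_nhdsLT z y u v r)]
    split_ifs
    exacts [hz.2 r hr, hy.2 r hr]

theorem leftLim_piecewise_Ico_const (hut : u < t) (x : ℝ) (y : ℝ → ℝ) :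
    Function.leftLim ((Ico u t).piecewise (fun _ => x) y) t = x := by
  have hconst := piecewise_Ico_eventuallyEq_nhdsLT (fun _ => x) y u t t
  rw [if_pos (right_mem_Ioc.2 hut)] at hconst
  exact leftLim_eq_of_tendsto (tendsto_const_nhds.congr' hconst.symm)

theorem IsCadlagOnR.tendsto_leftLim (hy : IsCadlagOnR T y) (ht : t ∈ Ioc 0 T) :
    Tendsto y (𝓝[<] t) (𝓝 (Function.leftLim y t)) := by
  obtain ⟨l, hl⟩ := hy.2 t ht
  rwa [leftLim_eq_of_tendsto hl]

theorem lregUsc_le_of_tendsto (hy : Tendsto y (𝓝[<] t) (𝓝 l)) (hby : b ≤ᶠ[𝓝[<] t] y) :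
    lregUsc b t ≤ l :=
  calc lregUsc b t ≤ limsup (fun s => (y s : EReal)) (𝓝[<] t) :=
        limsup_le_limsup (hby.mono fun _ => EReal.coe_le_coe)
    _ = l := (EReal.tendsto_coe.2 hy).limsup_eq

theorem le_lregLsc_of_tendsto (hy : Tendsto y (𝓝[<] t) (𝓝 l)) (hya : y ≤ᶠ[𝓝[<] t] a) :
    l ≤ lregLsc a t :=
  calc (l : EReal) = liminf (fun s => (y s : EReal)) (𝓝[<] t) :=
        (EReal.tendsto_coe.2 hy).liminf_eq.symm
    _ ≤ lregLsc a t := liminf_le_liminf (hya.mono fun _ => EReal.coe_le_coe)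

/-- The set `D(S)` of càdlàg selections of the bid–ask spread `S_t = [b_t, a_t]`, `t ∈ [0,T]`.
Paths are functions on all of `ℝ`, and no condition is imposed on their values outside `[0,T]`. -/
def cadlagSelections (T : ℝ) (b a : ℝ → ℝ) : Set (ℝ → ℝ) :=
  {y | IsCadlagOnR T y ∧ ∀ r ∈ Icc 0 T, b r ≤ y r ∧ y r ≤ a r}

theorem piecewise_Ico_mem_cadlagSelections (hy : y ∈ cadlagSelections T b a)
    (hz : IsCadlagOnR T z) (hbza : ∀ s ∈ Ico u v, b s ≤ z s ∧ z s ≤ a s) :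
    (Ico u v).piecewise z y ∈ cadlagSelections T b a := by
  refine ⟨hz.piecewise_Ico hy.1 u v, fun r hr => ?_⟩
  by_cases hrI : r ∈ Ico u v
  · simpa only [piecewise_eq_of_mem _ _ _ hrI] using hbza r hrI
  · simpa only [piecewise_eq_of_notMem _ _ _ hrI] using hy.2 r hr

theorem leftLim_mem_Icc_of_mem_cadlagSelections (hy : y ∈ cadlagSelections T b a)
    (ht : t ∈ Ioc 0 T) :
    ((Function.leftLim y t : ℝ) : EReal) ∈ Icc (lregUsc b t) (lregLsc a t) := by
  have hbya : ∀ᶠ s in 𝓝[<] t, b s ≤ y s ∧ y s ≤ a s := by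
    filter_upwards [Ioo_mem_nhdsLT ht.1] with s hs
    exact hy.2 s ⟨hs.1.le, hs.2.le.trans ht.2⟩
  have hlim := hy.1.tendsto_leftLim ht
  exact ⟨lregUsc_le_of_tendsto hlim (hbya.mono fun _ => And.left),
    le_lregLsc_of_tendsto hlim (hbya.mono fun _ => And.right)⟩

theorem exists_Ico_forall_le_and_le (hbx : lregUsc b t < x) (hxa : x < lregLsc a t) :
    ∃ u < t, ∀ s ∈ Ico u t, b s ≤ x ∧ x ≤ a s := by
  have hev : ∀ᶠ s in 𝓝[<] t, b s ≤ x ∧ x ≤ a s := by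
    filter_upwards [eventually_lt_of_limsup_lt hbx, eventually_lt_of_lt_liminf hxa] with s hb ha
    exact ⟨EReal.coe_le_coe_iff.1 hb.le, EReal.coe_le_coe_iff.1 ha.le⟩
  exact mem_nhdsLT_iff_exists_Ico_subset.1 hev

theorem exists_mem_cadlagSelections_leftLim_eq (hne : (cadlagSelections T b a).Nonempty)
    (hbx : lregUsc b t < x) (hxa : x < lregLsc a t) :
    ∃ y ∈ cadlagSelections T b a, Function.leftLim y t = x := by
  obtain ⟨y, hy⟩ := hne
  obtain ⟨u, hut, hbxa⟩ := exists_Ico_forall_le_and_le hbx hxa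
  exact ⟨(Ico u t).piecewise (fun _ => x) y,
    piecewise_Ico_mem_cadlagSelections hy (isCadlagOnR_const T x) hbxa,
    leftLim_piecewise_Ico_const hut x y⟩

end Cadlag

theorem statement17_general {T t : ℝ} {b a : ℝ → ℝ} (hne : (cadlagSelections T b a).Nonempty)
    (ht : t ∈ Ioc 0 T) :
    closure ((Function.leftLim · t) '' cadlagSelections T b a) =
      {x : ℝ | lregUsc b t ≤ x ∧ x ≤ lregLsc a t} := by
  apply Subset.antisymm
  · refine closure_minimal ?_ (isClosed_Icc.preimage continuous_coe_real_ereal)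
    rintro _ ⟨y, hy, rfl⟩
    exact leftLim_mem_Icc_of_mem_cadlagSelections hy ht
  · obtain ⟨y, hy⟩ := hne
    refine (preimage_Icc_subset_closure_insert_preimage_Ioo EReal.coe_strictMono
      (leftLim_mem_Icc_of_mem_cadlagSelections hy ht)).trans (closure_mono ?_)
    refine insert_subset ⟨y, hy, rfl⟩ fun x hx => ?_
    exact exists_mem_cadlagSelections_leftLim_eq ⟨y, hy⟩ hx.1 hx.2

/-- **Left limits of the càdlàg selections of a bid–ask spread constraint** (from
Example 8.2): for a right-usc `b` and right-lsc `a` with a càdlàg function `ȳ` strictly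
between them (also in the left limits), with `D(S) = {y ∈ D | b ≤ y ≤ a}`, one has
`cl{y_{t-} | y ∈ D(S)} = {x | ⃗b_t ≤ x ≤ a⃗_t}` for every `t ∈ (0,T]`. -/
theorem statement17 (T : ℝ) (hT : 0 < T) (b a : ℝ → ℝ)
    (hbusc : ∀ t ∈ Set.Ico (0:ℝ) T,
      Filter.limsup (fun s => (b s : EReal)) (𝓝[>] t) ≤ (b t : EReal))
    (halsc : ∀ t ∈ Set.Ico (0:ℝ) T,
      (a t : EReal) ≤ Filter.liminf (fun s => (a s : EReal)) (𝓝[>] t))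
    (ybar : ℝ → ℝ) (hybar : IsCadlagOnR T ybar)
    (hbetween : ∀ t ∈ Set.Icc (0:ℝ) T, b t < ybar t ∧ ybar t < a t)
    (hbetweenleft : ∀ t ∈ Set.Ioc (0:ℝ) T,
      lregUsc b t < ((Function.leftLim ybar t : ℝ) : EReal) ∧
      ((Function.leftLim ybar t : ℝ) : EReal) < lregLsc a t) :
    ∀ t ∈ Set.Ioc (0:ℝ) T,
      closure {x : ℝ | ∃ y : ℝ → ℝ,
        (IsCadlagOnR T y ∧ ∀ r ∈ Set.Icc (0:ℝ) T, b r ≤ y r ∧ y r ≤ a r) ∧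
        Function.leftLim y t = x} =
      {x : ℝ | lregUsc b t ≤ (x : EReal) ∧ (x : EReal) ≤ lregLsc a t} := by
  exact fun _ => statement17_general
    ⟨ybar, hybar, fun r hr => ⟨(hbetween r hr).1.le, (hbetween r hr).2.le⟩⟩
end
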